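/- Let R be a commutative Noetherian ring with unity, M an R-module (not necessarily finitely generated), and I an ideal of R with dim(R/(I + Ann M)) = d, where Ann M is the annihilator of M. Let t ≥ 0 be an integer and let J be an ideal of R such that H^{d+t}_{I+J}(M) ≠ 0. If cd(I,M) = t, then there is an isomorphism of R-modules H^d_J(H^t_I(M)) ≅ H^{d+t}_{I+J}(M). -/

import Mathlib

universe u

open CategoryTheory

/-- The cohomological dimension of `M` with respect to `I`:
`cd(I,M) = sup { i ∈ ℕ | H^i_I(M) ≠ 0 }`, as an element of `ℕ∞`. -/
noncomputable def cohomologicalDimension {R : Type u} [CommRing R] (I : Ideal R)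
    (M : ModuleCat.{u} R) : ℕ∞ :=
  sSup {c : ℕ∞ | ∃ i : ℕ, c = i ∧ Nontrivial ((localCohomology I i).obj M)}

/-!
Write `Γ_I(M)` for the `I`-power torsion submodule of `M`, in Mathlib `I.primaryComponent M`. Embed
`M` in an injective module `E` and let `C` be the cokernel of `M ⧸ Γ_I(M) → E ⧸ Γ_I(E)`. Over a
Noetherian ring `Γ_I(E)` is injective and `I`-power torsion modules have no higher `H_I`, so
`H^{q+1}_I(M) ≅ H^q_I(C)` for all `q`; likewise `H^{m+1}_{I+J}(M) ≅ H^m_{I+J}(C)` once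
`H_{I+J}(Γ_I(M))` vanishes in degrees above `m`. This dimension shift reduces the theorem to
`t = 0`, where both sides are `H^d_J(Γ_I(M))`, because `M ⧸ Γ_I(M)` then has no cohomology with
support in `I`, hence none with support in `I + J`.

The vanishing that drives the shift is `H^p_J(H^q_I(M)) = 0` for `p > d`: a finitely generated
submodule of `H^q_I(M)` is annihilated by a power of `I` and by `Ann M`, so its dimension is at
most `d`, and Grothendieck's vanishing theorem applies.
-/

noncomputable section

open Limits Opposite
open CategoryTheory.Abelian (Ext)

/-! ### Power torsion -/

section Torsion

variable {R : Type*} [CommRing R] {I J : Ideal R}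
variable {N N' : Type*} [AddCommGroup N] [Module R N] [AddCommGroup N'] [Module R N']

theorem mem_primaryComponent_iff {x : N} :
    x ∈ J.primaryComponent N ↔ ∃ n : ℕ, ∀ a ∈ J ^ n, a • x = 0 := by
  simp [Ideal.primaryComponent_mem]

theorem primaryComponent_anti (h : I ≤ J) : J.primaryComponent N ≤ I.primaryComponent N := by
  intro x hx
  obtain ⟨n, hn⟩ := mem_primaryComponent_iff.mp hx
  exact mem_primaryComponent_iff.mpr ⟨n, fun a ha ↦ hn a (Ideal.pow_right_mono h n ha)⟩

theorem primaryComponent_le_comap (J : Ideal R) (f : N →ₗ[R] N') :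
    J.primaryComponent N ≤ (J.primaryComponent N').comap f :=
  fun x hx ↦ J.primaryComponent_map_mem f ⟨x, hx⟩

theorem comap_primaryComponent_of_injective {f : N →ₗ[R] N'} (hf : Function.Injective f) :
    (J.primaryComponent N').comap f = J.primaryComponent N := by
  refine le_antisymm (fun x hx ↦ ?_) (primaryComponent_le_comap J f)
  obtain ⟨n, hn⟩ := mem_primaryComponent_iff.mp hx
  exact mem_primaryComponent_iff.mpr
    ⟨n, fun a ha ↦ hf (by rw [map_smul, hn a ha, map_zero])⟩

theorem mapQ_primaryComponent_injective {f : N →ₗ[R] N'} (hf : Function.Injective f) :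
    Function.Injective (Submodule.mapQ _ _ f (primaryComponent_le_comap J f)) := by
  rw [← LinearMap.ker_eq_bot, Submodule.ker_mapQ, comap_primaryComponent_of_injective hf,
    Submodule.mkQ_map_self]

theorem primaryComponent_eq_top_of_injective {f : N →ₗ[R] N'} (hf : Function.Injective f)
    (h : J.primaryComponent N' = ⊤) : J.primaryComponent N = ⊤ := by
  rw [← comap_primaryComponent_of_injective hf, h, Submodule.comap_top]

theorem primaryComponent_eq_top_of_surjective {f : N →ₗ[R] N'} (hf : Function.Surjective f)
    (h : J.primaryComponent N = ⊤) : J.primaryComponent N' = ⊤ := by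
  have := h.ge.trans (primaryComponent_le_comap J f)
  exact eq_top_iff.mpr fun y _ ↦ (hf y).elim fun x hx ↦ hx ▸ this Submodule.mem_top

theorem primaryComponent_primaryComponent :
    J.primaryComponent (J.primaryComponent N) = ⊤ := by
  rw [← comap_primaryComponent_of_injective (Submodule.subtype_injective _),
    Submodule.comap_subtype_self]

theorem primaryComponent_add_of_eq_top (h : I.primaryComponent N = ⊤) :
    (I + J).primaryComponent N = J.primaryComponent N := by
  refine le_antisymm (primaryComponent_anti le_sup_right) fun x hx ↦ ?_
  obtain ⟨m, hm⟩ := mem_primaryComponent_iff.mp (h.ge (Submodule.mem_top (x := x)))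
  obtain ⟨n, hn⟩ := mem_primaryComponent_iff.mp hx
  refine mem_primaryComponent_iff.mpr ⟨m + n, fun a ha ↦ ?_⟩
  obtain ⟨b, hb, c, hc, rfl⟩ := Submodule.mem_sup.mp (Ideal.sup_pow_add_le_pow_sup_pow ha)
  rw [add_smul, hm b hb, hn c hc, add_zero]

theorem exists_pow_smul_eq_zero_of_fg {L : Submodule R N} (hL : L.FG)
    (h : L ≤ J.primaryComponent N) : ∃ n : ℕ, ∀ a ∈ J ^ n, ∀ x ∈ L, a • x = 0 := by
  induction L, hL using Submodule.fg_induction with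
  | singleton x =>
    obtain ⟨n, hn⟩ := mem_primaryComponent_iff.mp (h (Submodule.mem_span_singleton_self x))
    refine ⟨n, fun a ha y hy ↦ ?_⟩
    obtain ⟨r, rfl⟩ := Submodule.mem_span_singleton.mp hy
    rw [smul_comm, hn a ha, smul_zero]
  | sup L₁ L₂ _ _ ih₁ ih₂ =>
    obtain ⟨m, hm⟩ := ih₁ (le_sup_left.trans h)
    obtain ⟨n, hn⟩ := ih₂ (le_sup_right.trans h)
    refine ⟨m + n, fun a ha y hy ↦ ?_⟩
    obtain ⟨y₁, h₁, y₂, h₂, rfl⟩ := Submodule.mem_sup.mp hy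
    rw [smul_add, hm a (Ideal.pow_le_pow_right (by lia) ha) _ h₁,
      hn a (Ideal.pow_le_pow_right (by lia) ha) _ h₂, add_zero]

variable [IsNoetherianRing R]

theorem mem_primaryComponent_of_pow_smul_mem {n : ℕ} {x : N}
    (h : ∀ a ∈ J ^ n, a • x ∈ J.primaryComponent N) : x ∈ J.primaryComponent N := by
  obtain ⟨m, hm⟩ := exists_pow_smul_eq_zero_of_fg (J := J)
    (L := Submodule.map (LinearMap.toSpanSingleton R N x) (J ^ n))
    (.map _ (IsNoetherian.noetherian (J ^ n))) (by rintro _ ⟨a, ha, rfl⟩; exact h a ha)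
  refine mem_primaryComponent_iff.mpr ⟨m + n, fun a ha ↦ ?_⟩
  rw [pow_add] at ha
  induction ha using Submodule.mul_induction_on' with
  | mem_mul_mem b hb c hc => exact (mul_smul b c x).trans (hm b hb _ ⟨c, hc, rfl⟩)
  | add b _ c _ hb hc => rw [add_smul, hb, hc, add_zero]

theorem primaryComponent_quotient_primaryComponent :
    J.primaryComponent (N ⧸ J.primaryComponent N) = ⊥ := by
  refine (Submodule.eq_bot_iff _).mpr fun y hy ↦ ?_
  obtain ⟨x, rfl⟩ := Submodule.Quotient.mk_surjective _ y
  obtain ⟨n, hn⟩ := mem_primaryComponent_iff.mp hy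
  refine (Submodule.Quotient.mk_eq_zero _).mpr
    (mem_primaryComponent_of_pow_smul_mem (n := n) fun a ha ↦ ?_)
  rw [← Submodule.Quotient.mk_eq_zero, Submodule.Quotient.mk_smul, hn a ha]

theorem exists_isSMulRegular_of_primaryComponent_eq_bot [Module.Finite R N]
    (h : J.primaryComponent N = ⊥) : ∃ r ∈ J, IsSMulRegular N r := by
  rw [← Ideal.annihilator_quotient (I := J), ← IsSMulRegular.subsingleton_linearMap_iff]
  refine subsingleton_of_forall_eq 0 fun f ↦ Submodule.linearMap_qext _ (LinearMap.ext_ring ?_)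
  refine (Submodule.mem_bot R).mp (h.le (mem_primaryComponent_iff.mpr ⟨1, fun a ha ↦ ?_⟩))
  rw [← map_smul, LinearMap.comp_apply, Submodule.mkQ_apply,
    (Submodule.Quotient.mk_eq_zero J).mpr (by simpa using ha), map_zero]

theorem exists_comap_pow_le_ker_of_primaryComponent_eq_top {𝔞 : Ideal R} (g : 𝔞 →ₗ[R] N)
    (h : J.primaryComponent N = ⊤) :
    ∃ n : ℕ, Submodule.comap 𝔞.subtype (J ^ n) ≤ LinearMap.ker g := by
  obtain ⟨n, hn⟩ := exists_pow_smul_eq_zero_of_fg (J := J) (L := LinearMap.range g)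
    (Submodule.fg_range g) (h ▸ le_top)
  obtain ⟨k, hk⟩ := J.exists_pow_inf_eq_pow_smul 𝔞
  refine ⟨n + k, fun x hx ↦ ?_⟩
  have hx' : (x : R) ∈ (J ^ n • (⊤ : Submodule R 𝔞)).map 𝔞.subtype := by
    have : (x : R) ∈ J ^ (n + k) • (⊤ : Ideal R) ⊓ 𝔞 := ⟨by simpa using hx, x.2⟩
    rw [hk (n + k) (by lia), Nat.add_sub_cancel] at this
    rw [Submodule.map_smul'', Submodule.map_subtype_top]
    exact Submodule.smul_mono le_rfl inf_le_right this
  obtain ⟨y, hy, hyx⟩ := hx'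
  obtain rfl : y = x := Subtype.ext hyx
  have hker : J ^ n • (⊤ : Submodule R 𝔞) ≤ LinearMap.ker g :=
    Submodule.smul_le.mpr fun a ha z _ ↦ (map_smul g a z).trans (hn a ha _ ⟨z, rfl⟩)
  exact hker hy

instance injective_primaryComponent {R : Type u} [CommRing R] [IsNoetherianRing R] {J : Ideal R}
    {N : Type u} [AddCommGroup N] [Module R N] [Module.Injective R N] :
    Module.Injective R (J.primaryComponent N) := by
  -- `g` kills `𝔞 ⊓ J ^ n`, so it extends along `𝔞 ⧸ (𝔞 ⊓ J ^ n) → R ⧸ J ^ n` to a map into `N`,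
  -- whose values are automatically killed by `J ^ n`.
  refine Module.Baer.injective fun 𝔞 g ↦ ?_
  obtain ⟨n, hn⟩ :=
    exists_comap_pow_le_ker_of_primaryComponent_eq_top g primaryComponent_primaryComponent
  let q : 𝔞 →ₗ[R] R ⧸ J ^ n := Submodule.mkQ _ ∘ₗ 𝔞.subtype
  have hq : LinearMap.ker q ≤ LinearMap.ker ((J.primaryComponent N).subtype ∘ₗ g) := fun x hx ↦
    congrArg Subtype.val (hn ((Submodule.Quotient.mk_eq_zero (J ^ n)).mp hx))
  obtain ⟨h, hh⟩ := Module.Injective.out (R := R) (Q := N) ((LinearMap.ker q).liftQ q le_rfl)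
    (LinearMap.ker_eq_bot.mp (Submodule.ker_liftQ_eq_bot _ _ _ le_rfl))
    ((LinearMap.ker q).liftQ _ hq)
  refine ⟨LinearMap.codRestrict _ (h ∘ₗ Submodule.mkQ _) fun r ↦ ?_,
    fun x hx ↦ Subtype.ext (hh (Submodule.Quotient.mk ⟨x, hx⟩))⟩
  refine mem_primaryComponent_iff.mpr ⟨n, fun a ha ↦ ?_⟩
  rw [LinearMap.comp_apply, ← map_smul, ← map_smul, smul_eq_mul, Submodule.mkQ_apply,
    (Submodule.Quotient.mk_eq_zero _).mpr (Ideal.mul_mem_right _ _ ha), map_zero]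

end Torsion

/-! ### Comparison of the two `Ext` functors -/

section Comparison

universe v' w'

variable {R : Type*} [CommRing R] {C : Type*} [Category.{v'} C] [Abelian C] [Linear R C]

theorem projectiveResolution_extMk_zero_eq_zero_iff [HasExt.{w'} C] {X Y : C}
    (P : ProjectiveResolution X) (f : P.complex.X 0 ⟶ Y) (hf : P.complex.d 1 0 ≫ f = 0) :
    P.extMk f 1 rfl hf = 0 ↔ f = 0 := by
  refine ⟨fun h ↦ ?_, by rintro rfl; exact P.extMk_zero 1 rfl⟩
  rw [← P.extEquivCohomologyClass.apply_eq_iff_eq,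
    P.extEquivCohomologyClass_extMk, P.extEquivCohomologyClass_zero,
    CochainComplex.HomComplex.CohomologyClass.mk_eq_zero_iff,
    CochainComplex.HomComplex.Cocycle.toSingleMk_mem_coboundaries_iff _ _ _ _ _ 1 (by lia)] at h
  obtain ⟨g, hg⟩ := h
  have : IsZero (P.cochainComplex.X 1) := P.cochainComplex.isZero_of_isStrictlyLE 0 1
  rw [this.eq_zero_of_src g, comp_zero] at hg
  rwa [eq_comm, Preadditive.IsIso.comp_left_eq_zero] at hg

variable (R) in
/-- The complex `Hom(P, Y)` for a projective resolution `P`. It is encoded as a chain complex in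
the opposite of the category of modules, because that is where `_root_.Ext` is computed as a left
derived functor. -/
abbrev homComplex {X : C} (P : ProjectiveResolution X) (Y : C) :
    ChainComplex (ModuleCat.{v'} R)ᵒᵖ ℕ :=
  (((linearYoneda R C).obj Y).rightOp.mapHomologicalComplex _).obj P.complex

variable (R) in
/-- The module of `n`-cocycles of the complex `Hom(P, Y)`. -/
abbrev extCocycles {X : C} (P : ProjectiveResolution X) (Y : C) (n : ℕ) : ModuleCat.{v'} R :=
  ((homComplex R P Y).opcycles n).unop

namespace extCocycles

variable {X X' Y Y' : C}

variable (R) in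
/-- The inclusion of the `n`-cocycles of `Hom(P, Y)` in `Hom(P_n, Y)`. -/
def inclusion (P : ProjectiveResolution X) (Y : C) (n : ℕ) :
    extCocycles R P Y n ⟶ ModuleCat.of R (P.complex.X n ⟶ Y) :=
  ((homComplex R P Y).pOpcycles n).unop

theorem inclusion_injective (P : ProjectiveResolution X) (Y : C) (n : ℕ) :
    Function.Injective (inclusion R P Y n) :=
  (ModuleCat.mono_iff_injective _).mp
    (inferInstanceAs (Mono ((homComplex R P Y).pOpcycles n).unop))

theorem d_comp_inclusion {P : ProjectiveResolution X} {n : ℕ} (z : extCocycles R P Y n) (m : ℕ) :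
    P.complex.d m n ≫ inclusion R P Y n z = 0 :=
  congrArg (fun f ↦ f.unop z) ((homComplex R P Y).d_pOpcycles m n)

theorem exists_inclusion_eq {P : ProjectiveResolution X} {n : ℕ} (f : P.complex.X n ⟶ Y)
    (hf : P.complex.d (n + 1) n ≫ f = 0) : ∃ z, inclusion R P Y n z = f :=
  let K := homComplex R P Y
  have hexact : (ShortComplex.mk _ _ (K.d_pOpcycles (n + 1) n)).Exact :=
    ShortComplex.exact_of_g_is_cokernel _ (K.opcyclesIsCokernel (n + 1) n (by simp))
  (ShortComplex.moduleCat_exact_iff _).mp hexact.unop f hf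

section DerivedClass

variable [EnoughProjectives C]

variable (R) in
/-- The left derived functors of `Hom(-, Y)` are computed by a projective resolution. -/
def derivedIso (P : ProjectiveResolution X) (Y : C) (n : ℕ) :
    (((linearYoneda R C).obj Y).rightOp.leftDerived n).obj X ≅ (homComplex R P Y).homology n :=
  P.isoLeftDerivedObj ((linearYoneda R C).obj Y).rightOp n

variable (R) in
/-- The map sending a cocycle to its class in the module `_root_.Ext R C n`. -/
def derivedClass (P : ProjectiveResolution X) (Y : C) (n : ℕ) :
    extCocycles R P Y n ⟶ ((_root_.Ext R C n).obj (op X)).obj Y :=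
  ((homComplex R P Y).homologyι n).unop ≫ (derivedIso R P Y n).hom.unop

theorem derivedClass_surjective (P : ProjectiveResolution X) (Y : C) (n : ℕ) :
    Function.Surjective (derivedClass R P Y n) :=
  have : Epi ((homComplex R P Y).homologyι n).unop := unop_epi_of_mono _
  (ModuleCat.epi_iff_surjective _).mp (epi_comp _ (derivedIso R P Y n).hom.unop)

theorem derivedClass_eq_zero_iff {P : ProjectiveResolution X} {n m : ℕ}
    (hm : (ComplexShape.down ℕ).next n = m) (z : extCocycles R P Y n) :
    derivedClass R P Y n z = 0 ↔ ∃ g : P.complex.X m ⟶ Y,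
      P.complex.d n m ≫ g = inclusion R P Y n z := by
  let K := homComplex R P Y
  have inclusion_coboundary (g : P.complex.X m ⟶ Y) :
      inclusion R P Y n ((K.fromOpcycles n m).unop g) = P.complex.d n m ≫ g :=
    congrArg (fun f ↦ f.unop g) (K.p_fromOpcycles n m)
  have hexact : (ShortComplex.mk _ _ (K.homologyι_comp_fromOpcycles n m)).Exact :=
    ShortComplex.exact_of_f_is_kernel _ (K.homologyIsKernel n m hm)
  have hiso : Function.Injective (derivedIso R P Y n).hom.unop :=
    (ModuleCat.mono_iff_injective _).mp inferInstance
  calc derivedClass R P Y n z = 0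
      ↔ (K.homologyι n).unop z = 0 := map_eq_zero_iff _ hiso
    _ ↔ ∃ g, (K.fromOpcycles n m).unop g = z :=
      (ShortComplex.ShortExact.moduleCat_exact_iff_function_exact _).mp hexact.unop z
    _ ↔ ∃ g, P.complex.d n m ≫ g = inclusion R P Y n z :=
      exists_congr fun g ↦ by
        rw [← inclusion_coboundary g, (inclusion_injective P Y n).eq_iff]

theorem exists_derivedClass_eq_map_app {P : ProjectiveResolution X} {P' : ProjectiveResolution X'}
    {g : X' ⟶ X} (φ : ProjectiveResolution.Hom P' P g) {n : ℕ} (z : extCocycles R P Y n) :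
    ∃ z', inclusion R P' Y n z' = φ.hom.f n ≫ inclusion R P Y n z ∧
      derivedClass R P' Y n z' =
        ((_root_.Ext R C n).map g.op).app Y (derivedClass R P Y n z) := by
  let F := ((linearYoneda R C).obj Y).rightOp
  let Φ : homComplex R P' Y ⟶ homComplex R P Y := (F.mapHomologicalComplex _).map φ.hom
  have h : (F.leftDerived n).map g ≫ (derivedIso R P Y n).hom =
      (derivedIso R P' Y n).hom ≫ HomologicalComplex.homologyMap Φ n :=
    ProjectiveResolution.isoLeftDerivedObj_hom_naturality g P' P φ.hom
      (φ.hom_f_zero_comp_π_f_zero.trans (by simp)) F n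
  refine ⟨(HomologicalComplex.opcyclesMap Φ n).unop z,
    congrArg (fun f ↦ f.unop z) (HomologicalComplex.p_opcyclesMap Φ n), ?_⟩
  have h' : ((derivedIso R P' Y n).hom ≫ (homComplex R P' Y).homologyι n) ≫
      HomologicalComplex.opcyclesMap Φ n = (F.leftDerived n).map g ≫ (derivedIso R P Y n).hom ≫
        (homComplex R P Y).homologyι n := by
    rw [reassoc_of% h, HomologicalComplex.homologyι_naturality, Category.assoc]
  exact congrArg (fun f ↦ f.unop z) h'

theorem exists_derivedClass_eq_map {P : ProjectiveResolution X} (f : Y ⟶ Y') {n : ℕ}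
    (z : extCocycles R P Y n) :
    ∃ z', inclusion R P Y' n z' = inclusion R P Y n z ≫ f ∧
      derivedClass R P Y' n z' =
        ((_root_.Ext R C n).obj (op X)).map f (derivedClass R P Y n z) := by
  let α := NatTrans.rightOp ((linearYoneda R C).map f)
  let Φ : homComplex R P Y' ⟶ homComplex R P Y := (NatTrans.mapHomologicalComplex α _).app P.complex
  have h : (NatTrans.leftDerived α n).app X ≫ (derivedIso R P Y n).hom =
      (derivedIso R P Y' n).hom ≫ HomologicalComplex.homologyMap Φ n := by
    rw [← Iso.eq_comp_inv, Category.assoc]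
    exact P.leftDerived_app_eq α n
  refine ⟨(HomologicalComplex.opcyclesMap Φ n).unop z,
    congrArg (fun f ↦ f.unop z) (HomologicalComplex.p_opcyclesMap Φ n), ?_⟩
  have h' : ((derivedIso R P Y' n).hom ≫ (homComplex R P Y').homologyι n) ≫
      HomologicalComplex.opcyclesMap Φ n = (NatTrans.leftDerived α n).app X ≫
        (derivedIso R P Y n).hom ≫ (homComplex R P Y).homologyι n := by
    rw [reassoc_of% h, HomologicalComplex.homologyι_naturality, Category.assoc]
  exact congrArg (fun f ↦ f.unop z) h'

end DerivedClass

variable (R) in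
/-- The map sending a cocycle to its class in the module `Abelian.Ext`. -/
def extClass [HasExt.{w'} C] (P : ProjectiveResolution X) (Y : C) (n : ℕ) :
    extCocycles R P Y n →ₗ[R] Ext X Y n where
  toFun z := P.extMk (inclusion R P Y n z) (n + 1) rfl (d_comp_inclusion z _)
  map_add' z z' := by
    rw [P.add_extMk]
    congr 1
    exact map_add (inclusion R P Y n).hom z z'
  map_smul' r z := by
    rw [RingHom.id_apply, Ext.smul_eq_comp_mk₀, P.extMk_comp_mk₀]
    congr 1
    rw [Linear.comp_smul, Category.comp_id]
    exact map_smul (inclusion R P Y n).hom r z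

section ExtClass

variable [HasExt.{w'} C]

theorem extClass_apply (P : ProjectiveResolution X) (n : ℕ) (z : extCocycles R P Y n) :
    extClass R P Y n z = P.extMk (inclusion R P Y n z) (n + 1) rfl (d_comp_inclusion z _) :=
  rfl

theorem extClass_surjective (P : ProjectiveResolution X) (Y : C) (n : ℕ) :
    Function.Surjective (extClass R P Y n) := fun α ↦ by
  obtain ⟨f, hf, rfl⟩ := P.extMk_surjective α (n + 1) rfl
  obtain ⟨z, rfl⟩ := exists_inclusion_eq (R := R) f hf
  exact ⟨z, rfl⟩

theorem ker_derivedClass_eq_ker_extClass [EnoughProjectives C] (P : ProjectiveResolution X) (Y : C)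
    (n : ℕ) : LinearMap.ker (derivedClass R P Y n).hom = LinearMap.ker (extClass R P Y n) := by
  ext z
  rw [LinearMap.mem_ker, LinearMap.mem_ker, extClass_apply]
  cases n with
  | zero =>
    rw [projectiveResolution_extMk_zero_eq_zero_iff]
    exact (derivedClass_eq_zero_iff (m := 0) (by simp) z).trans (by simp [eq_comm])
  | succ n =>
    rw [P.extMk_eq_zero_iff _ _ rfl _ n rfl]
    exact derivedClass_eq_zero_iff (by simp) z

end ExtClass

end extCocycles

section ExtEquiv

variable [EnoughProjectives C] [HasExt.{w'} C] {X X' Y Y' : C} {n : ℕ}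

variable (R X Y n) in
/-- The `Ext`-modules obtained by deriving `Hom(-, Y)` agree with the ones defined through the
derived category. Local cohomology is built from the former, while long exact sequences and Yoneda
products are available for the latter. -/
def extEquivAbelianExt : ((_root_.Ext R C n).obj (op X)).obj Y ≃ₗ[R] Ext X Y n :=
  ((extCocycles.derivedClass R (projectiveResolution X) Y n).hom.quotKerEquivOfSurjective
    (extCocycles.derivedClass_surjective _ Y n)).symm.trans <|
    (Submodule.quotEquivOfEq _ _ (extCocycles.ker_derivedClass_eq_ker_extClass _ Y n)).trans <|
      (extCocycles.extClass R (projectiveResolution X) Y n).quotKerEquivOfSurjective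
        (extCocycles.extClass_surjective _ Y n)

theorem extEquivAbelianExt_derivedClass (z : extCocycles R (projectiveResolution X) Y n) :
    extEquivAbelianExt R X Y n (extCocycles.derivedClass R _ Y n z) =
      extCocycles.extClass R _ Y n z := by
  have h : ((extCocycles.derivedClass R (projectiveResolution X) Y n).hom.quotKerEquivOfSurjective
      (extCocycles.derivedClass_surjective _ Y n)).symm (extCocycles.derivedClass R _ Y n z) =
      Submodule.Quotient.mk z := by
    rw [LinearEquiv.symm_apply_eq]
    rfl
  rw [extEquivAbelianExt, LinearEquiv.trans_apply, h]
  rfl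

theorem extEquivAbelianExt_map_app (g : X' ⟶ X) (x : ((_root_.Ext R C n).obj (op X)).obj Y) :
    extEquivAbelianExt R X' Y n (((_root_.Ext R C n).map g.op).app Y x) =
      (Ext.mk₀ g).comp (extEquivAbelianExt R X Y n x) (zero_add n) := by
  obtain ⟨z, rfl⟩ := extCocycles.derivedClass_surjective (projectiveResolution X) Y n x
  let φ : ProjectiveResolution.Hom (projectiveResolution X') (projectiveResolution X) g :=
    { hom := ProjectiveResolution.lift g _ _
      hom_f_zero_comp_π_f_zero :=
        (ProjectiveResolution.lift_commutes_zero g _ _).trans (by simp) }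
  obtain ⟨z', hz', h⟩ := extCocycles.exists_derivedClass_eq_map_app φ z
  simp only [← h, extEquivAbelianExt_derivedClass, extCocycles.extClass_apply, hz',
    ProjectiveResolution.mk₀_comp_extMk _ _ _ _ φ]

theorem extEquivAbelianExt_map (f : Y ⟶ Y') (x : ((_root_.Ext R C n).obj (op X)).obj Y) :
    extEquivAbelianExt R X Y' n (((_root_.Ext R C n).obj (op X)).map f x) =
      (extEquivAbelianExt R X Y n x).comp (Ext.mk₀ f) (add_zero n) := by
  obtain ⟨z, rfl⟩ := extCocycles.derivedClass_surjective (projectiveResolution X) Y n x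
  obtain ⟨z', hz', h⟩ := extCocycles.exists_derivedClass_eq_map f z
  simp only [← h, extEquivAbelianExt_derivedClass, extCocycles.extClass_apply, hz',
    ProjectiveResolution.extMk_comp_mk₀]

end ExtEquiv

end Comparison

/-! ### Local cohomology as a direct limit -/

variable {R : Type u} [CommRing R] {J : Ideal R}

section Elements

variable (J)

/-- The canonical projection `R ⧸ J ^ n ⟶ R ⧸ J ^ m` for `m ≤ n`. -/
def quotientPowProj {m n : ℕ} (h : m ≤ n) :
    ModuleCat.of R (R ⧸ J ^ n) ⟶ ModuleCat.of R (R ⧸ J ^ m) :=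
  ModuleCat.ofHom (Submodule.mapQ _ _ LinearMap.id (Ideal.pow_le_pow_right h))

/-- The structure map `Ext^i(R/J^n, -) ⟶ H^i_J` of the colimit defining local cohomology. -/
def localCohomologyι (i n : ℕ) :
    (_root_.Ext R (ModuleCat.{u} R) i).obj (op (ModuleCat.of R (R ⧸ J ^ n))) ⟶
      localCohomology J i :=
  colimit.ι (localCohomology.diagram (localCohomology.idealPowersDiagram J) i) (op (op n))

variable {J}

theorem map_quotientPowProj_comp_localCohomologyι {m n : ℕ} (h : m ≤ n) (i : ℕ) :
    (_root_.Ext R (ModuleCat.{u} R) i).map (quotientPowProj J h).op ≫ localCohomologyι J i n =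
      localCohomologyι J i m :=
  colimit.w (localCohomology.diagram (localCohomology.idealPowersDiagram J) i) (homOfLE h).op.op

variable {M N : ModuleCat.{u} R} {i : ℕ}

variable (J M i) in
/-- `H^i_J(M)` as a colimit of the modules `Ext^i(R/J^n, M)`. -/
def localCohomologyIsColimit :
    IsColimit (((evaluation _ _).obj M).mapCocone
      (colimit.cocone (localCohomology.diagram (localCohomology.idealPowersDiagram J) i))) :=
  have := localCohomology.hasColimitDiagram.{u, 0} (localCohomology.idealPowersDiagram J) i
  isColimitOfPreserves _ (colimit.isColimit _)

theorem exists_localCohomologyι_app_eq (x : (localCohomology J i).obj M) :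
    ∃ n y, (localCohomologyι J i n).app M y = x := by
  have := preservesSmallestFilteredColimits_of_preservesFilteredColimits.{u, u}
    (forget (ModuleCat.{u} R))
  obtain ⟨n, y, hy⟩ := Concrete.isColimit_exists_rep _ (localCohomologyIsColimit J M i) x
  exact ⟨n.unop.unop, y, hy⟩

theorem exists_map_eq_zero_of_localCohomologyι_app_eq_zero {n : ℕ}
    {y : ((_root_.Ext R (ModuleCat.{u} R) i).obj (op (ModuleCat.of R (R ⧸ J ^ n)))).obj M}
    (h : (localCohomologyι J i n).app M y = 0) :
    ∃ (m : ℕ) (hm : n ≤ m),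
      ((_root_.Ext R (ModuleCat.{u} R) i).map (quotientPowProj J hm).op).app M y = 0 := by
  have := preservesSmallestFilteredColimits_of_preservesFilteredColimits.{u, u}
    (forget (ModuleCat.{u} R))
  obtain ⟨m, f, g, hm⟩ := Concrete.isColimit_exists_of_rep_eq _ (localCohomologyIsColimit J M i)
    (i := op (op n)) (j := op (op n)) y 0 (h.trans (map_zero _).symm)
  exact ⟨m.unop.unop, leOfHom f.unop.unop, hm.trans (map_zero _)⟩

variable (J M i) in
/-- The canonical map `Ext^i(R/J^n, M) → H^i_J(M)`. -/
def localCohomologyMk (n : ℕ) :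
    Ext (ModuleCat.of R (R ⧸ J ^ n)) M i →ₗ[R] (localCohomology J i).obj M :=
  ((localCohomologyι J i n).app M).hom ∘ₗ (extEquivAbelianExt R _ M i).symm.toLinearMap

theorem localCohomologyMk_extEquivAbelianExt {n : ℕ}
    (y : ((_root_.Ext R (ModuleCat.{u} R) i).obj (op (ModuleCat.of R (R ⧸ J ^ n)))).obj M) :
    localCohomologyMk J M i n (extEquivAbelianExt R _ M i y) =
      (localCohomologyι J i n).app M y :=
  congrArg _ (LinearEquiv.symm_apply_apply _ y)

theorem exists_localCohomologyMk_eq (x : (localCohomology J i).obj M) :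
    ∃ n α, localCohomologyMk J M i n α = x := by
  obtain ⟨n, y, hy⟩ := exists_localCohomologyι_app_eq x
  exact ⟨n, _, (localCohomologyMk_extEquivAbelianExt y).trans hy⟩

theorem localCohomologyMk_comp {m n : ℕ} (h : n ≤ m)
    (α : Ext (ModuleCat.of R (R ⧸ J ^ n)) M i) :
    localCohomologyMk J M i m ((Ext.mk₀ (quotientPowProj J h)).comp α (zero_add i)) =
      localCohomologyMk J M i n α := by
  obtain ⟨y, rfl⟩ := (extEquivAbelianExt R _ M i).surjective α
  rw [← extEquivAbelianExt_map_app, localCohomologyMk_extEquivAbelianExt,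
    localCohomologyMk_extEquivAbelianExt, ← map_quotientPowProj_comp_localCohomologyι h]
  rfl

theorem exists_comp_eq_zero_of_localCohomologyMk_eq_zero {n : ℕ}
    {α : Ext (ModuleCat.of R (R ⧸ J ^ n)) M i} (h : localCohomologyMk J M i n α = 0) :
    ∃ (m : ℕ) (hm : n ≤ m), (Ext.mk₀ (quotientPowProj J hm)).comp α (zero_add i) = 0 := by
  obtain ⟨y, rfl⟩ := (extEquivAbelianExt R _ M i).surjective α
  rw [localCohomologyMk_extEquivAbelianExt] at h
  obtain ⟨m, hm, hy⟩ := exists_map_eq_zero_of_localCohomologyι_app_eq_zero h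
  exact ⟨m, hm, by rw [← extEquivAbelianExt_map_app, hy, map_zero]⟩

@[simp]
theorem localCohomology_map_mk (f : M ⟶ N) (n : ℕ) (α : Ext (ModuleCat.of R (R ⧸ J ^ n)) M i) :
    (localCohomology J i).map f (localCohomologyMk J M i n α) =
      localCohomologyMk J N i n (α.comp (Ext.mk₀ f) (add_zero i)) := by
  obtain ⟨y, rfl⟩ := (extEquivAbelianExt R _ M i).surjective α
  rw [← extEquivAbelianExt_map, localCohomologyMk_extEquivAbelianExt,
    localCohomologyMk_extEquivAbelianExt]
  exact ConcreteCategory.congr_hom ((localCohomologyι J i n).naturality f).symm y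

section Lift

variable {Q : Type u} [AddCommGroup Q] [Module R Q]
  (φ : ∀ n, Ext (ModuleCat.of R (R ⧸ J ^ n)) M i →ₗ[R] Q)
  (hφ : ∀ (m n : ℕ) (h : m ≤ n) (α : Ext (ModuleCat.of R (R ⧸ J ^ m)) M i),
    φ n ((Ext.mk₀ (quotientPowProj J h)).comp α (zero_add i)) = φ m α)

/-- The linear map out of `H^i_J(M)` induced by compatible maps out of the `Ext^i(R/J^n, M)`. -/
def localCohomologyLift : (localCohomology J i).obj M →ₗ[R] Q :=
  ((localCohomologyIsColimit J M i).desc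
    { pt := ModuleCat.of R Q
      ι :=
        { app n := ModuleCat.ofHom (φ n.unop.unop ∘ₗ (extEquivAbelianExt R _ M i).toLinearMap)
          naturality _ _ f := by
            ext y
            exact (congrArg (φ _) (extEquivAbelianExt_map_app _ _)).trans
              (hφ _ _ (leOfHom f.unop.unop) _) } }).hom

theorem localCohomologyLift_mk (n : ℕ) (α : Ext (ModuleCat.of R (R ⧸ J ^ n)) M i) :
    localCohomologyLift φ hφ (localCohomologyMk J M i n α) = φ n α := by
  obtain ⟨y, rfl⟩ := (extEquivAbelianExt R _ M i).surjective α
  rw [localCohomologyMk_extEquivAbelianExt]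
  exact ConcreteCategory.congr_hom ((localCohomologyIsColimit J M i).fac _ (op (op n))) y

end Lift

end Elements

section LongExactSequence

variable (J) {S : ShortComplex (ModuleCat.{u} R)} (hS : S.ShortExact) (i : ℕ)

/-- The connecting homomorphism of the long exact sequence of local cohomology. -/
def localCohomologyδ :
    (localCohomology J i).obj S.X₃ →ₗ[R] (localCohomology J (i + 1)).obj S.X₁ :=
  localCohomologyLift (fun n ↦ localCohomologyMk J S.X₁ (i + 1) n ∘ₗ
    hS.extClass.postcompOfLinear R _ rfl) fun _ _ h α ↦ by
      simp only [LinearMap.comp_apply, LinearMap.flip_apply, Ext.bilinearCompOfLinear_apply_apply]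
      rw [Ext.comp_assoc _ _ _ (zero_add i) rfl (by lia), localCohomologyMk_comp]

@[simp]
theorem localCohomologyδ_mk (n : ℕ) (α : Ext (ModuleCat.of R (R ⧸ J ^ n)) S.X₃ i) :
    localCohomologyδ J hS i (localCohomologyMk J S.X₃ i n α) =
      localCohomologyMk J S.X₁ (i + 1) n (α.comp hS.extClass rfl) :=
  localCohomologyLift_mk ..

include hS in
theorem localCohomology_exact_map_map :
    Function.Exact ((localCohomology J i).map S.f) ((localCohomology J i).map S.g) := by
  intro x
  constructor
  · obtain ⟨n, α, rfl⟩ := exists_localCohomologyMk_eq x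
    intro hα
    rw [localCohomology_map_mk] at hα
    obtain ⟨m, hm, h⟩ := exists_comp_eq_zero_of_localCohomologyMk_eq_zero hα
    rw [← Ext.comp_assoc _ _ _ (zero_add i) _ (by lia)] at h
    obtain ⟨β, hβ⟩ := Ext.covariant_sequence_exact₂ _ hS _ h
    exact ⟨localCohomologyMk J _ i m β, by rw [localCohomology_map_mk, hβ, localCohomologyMk_comp]⟩
  · rintro ⟨y, rfl⟩
    obtain ⟨n, α, rfl⟩ := exists_localCohomologyMk_eq y
    simp [Ext.comp_assoc_of_second_deg_zero]

theorem localCohomology_exact_map_δ :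
    Function.Exact ((localCohomology J i).map S.g) (localCohomologyδ J hS i) := by
  intro x
  constructor
  · obtain ⟨n, α, rfl⟩ := exists_localCohomologyMk_eq x
    intro hα
    rw [localCohomologyδ_mk] at hα
    obtain ⟨m, hm, h⟩ := exists_comp_eq_zero_of_localCohomologyMk_eq_zero hα
    rw [← Ext.comp_assoc _ _ _ (zero_add i) _ (by lia)] at h
    obtain ⟨β, hβ⟩ := Ext.covariant_sequence_exact₃ _ hS _ rfl h
    exact ⟨localCohomologyMk J _ i m β, by rw [localCohomology_map_mk, hβ, localCohomologyMk_comp]⟩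
  · rintro ⟨y, rfl⟩
    obtain ⟨n, α, rfl⟩ := exists_localCohomologyMk_eq y
    simp [Ext.comp_assoc_of_second_deg_zero]

theorem localCohomology_exact_δ_map :
    Function.Exact (localCohomologyδ J hS i) ((localCohomology J (i + 1)).map S.f) := by
  intro x
  constructor
  · obtain ⟨n, α, rfl⟩ := exists_localCohomologyMk_eq x
    intro hα
    rw [localCohomology_map_mk] at hα
    obtain ⟨m, hm, h⟩ := exists_comp_eq_zero_of_localCohomologyMk_eq_zero hα
    rw [← Ext.comp_assoc _ _ _ (zero_add (i + 1)) _ (by lia)] at h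
    obtain ⟨β, hβ⟩ := Ext.covariant_sequence_exact₁ _ hS _ h rfl
    exact ⟨localCohomologyMk J _ i m β,
      by rw [localCohomologyδ_mk, hβ, localCohomologyMk_comp]⟩
  · rintro ⟨y, rfl⟩
    obtain ⟨n, α, rfl⟩ := exists_localCohomologyMk_eq y
    simp [Ext.comp_assoc_of_third_deg_zero]

variable {J i}

include hS in
theorem subsingleton_localCohomology_X₂
    (h₁ : Subsingleton ((localCohomology J i).obj S.X₁))
    (h₃ : Subsingleton ((localCohomology J i).obj S.X₃)) :
    Subsingleton ((localCohomology J i).obj S.X₂) := by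
  refine subsingleton_of_forall_eq 0 fun x ↦ ?_
  obtain ⟨y, rfl⟩ := (localCohomology_exact_map_map J hS i x).mp (Subsingleton.elim _ _)
  rw [Subsingleton.elim y 0, map_zero]

include hS in
theorem subsingleton_localCohomology_X₃
    (h₂ : Subsingleton ((localCohomology J i).obj S.X₂))
    (h₁ : Subsingleton ((localCohomology J (i + 1)).obj S.X₁)) :
    Subsingleton ((localCohomology J i).obj S.X₃) := by
  refine subsingleton_of_forall_eq 0 fun x ↦ ?_
  obtain ⟨y, rfl⟩ := (localCohomology_exact_map_δ J hS i x).mp (Subsingleton.elim _ _)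
  rw [Subsingleton.elim y 0, map_zero]

include hS in
theorem subsingleton_localCohomology_X₁
    (h₃ : Subsingleton ((localCohomology J i).obj S.X₃))
    (h₂ : Subsingleton ((localCohomology J (i + 1)).obj S.X₂)) :
    Subsingleton ((localCohomology J (i + 1)).obj S.X₁) := by
  refine subsingleton_of_forall_eq 0 fun x ↦ ?_
  obtain ⟨y, rfl⟩ := (localCohomology_exact_δ_map J hS i x).mp (Subsingleton.elim _ _)
  rw [Subsingleton.elim y 0, map_zero]

include hS in
theorem nonempty_localCohomology_X₃_iso_X₁
    (h : Subsingleton ((localCohomology J i).obj S.X₂))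
    (h' : Subsingleton ((localCohomology J (i + 1)).obj S.X₂)) :
    Nonempty ((localCohomology J i).obj S.X₃ ≅ (localCohomology J (i + 1)).obj S.X₁) := by
  refine ⟨(LinearEquiv.ofBijective (localCohomologyδ J hS i)
    ⟨(injective_iff_map_eq_zero _).mpr fun x hx ↦ ?_, fun x ↦
      (localCohomology_exact_δ_map J hS i x).mp (Subsingleton.elim _ _)⟩).toModuleIso⟩
  obtain ⟨y, rfl⟩ := (localCohomology_exact_map_δ J hS i x).mp hx
  rw [Subsingleton.elim y 0, map_zero]

include hS in
theorem nonempty_localCohomology_X₂_iso_X₃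
    (h : Subsingleton ((localCohomology J i).obj S.X₁))
    (h' : Subsingleton ((localCohomology J (i + 1)).obj S.X₁)) :
    Nonempty ((localCohomology J i).obj S.X₂ ≅ (localCohomology J i).obj S.X₃) := by
  refine ⟨(LinearEquiv.ofBijective ((localCohomology J i).map S.g).hom
    ⟨(injective_iff_map_eq_zero _).mpr fun x hx ↦ ?_, fun x ↦
      (localCohomology_exact_map_δ J hS i x).mp (Subsingleton.elim _ _)⟩).toModuleIso⟩
  obtain ⟨y, rfl⟩ := (localCohomology_exact_map_map J hS i x).mp hx
  rw [Subsingleton.elim y 0, map_zero]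

end LongExactSequence

section Elementary

variable {M : ModuleCat.{u} R} {i : ℕ}

theorem localCohomology_map_smul_id (r : R) (x : (localCohomology J i).obj M) :
    (localCohomology J i).map (r • 𝟙 M) x = r • x := by
  obtain ⟨n, α, rfl⟩ := exists_localCohomologyMk_eq x
  rw [localCohomology_map_mk, ← map_smul, Ext.smul_eq_comp_mk₀]

theorem smul_localCohomology_eq_zero {r : R} (hr : r ∈ Module.annihilator R M)
    (x : (localCohomology J i).obj M) : r • x = 0 := by
  have h : r • 𝟙 M = 0 := by
    ext y
    exact Module.mem_annihilator.mp hr y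
  obtain ⟨n, α, rfl⟩ := exists_localCohomologyMk_eq x
  rw [← localCohomology_map_smul_id, h, localCohomology_map_mk]
  simp

theorem primaryComponent_localCohomology_eq_top :
    Ideal.primaryComponent ((localCohomology J i).obj M) J = ⊤ := by
  refine eq_top_iff.mpr fun x _ ↦ ?_
  obtain ⟨n, α, rfl⟩ := exists_localCohomologyMk_eq x
  refine mem_primaryComponent_iff.mpr ⟨n, fun a ha ↦ ?_⟩
  have h : a • 𝟙 (ModuleCat.of R (R ⧸ J ^ n)) = 0 := by
    ext
    exact (Submodule.Quotient.mk_eq_zero _).mpr (by simpa using ha)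
  rw [← map_smul, ← Ext.mk₀_id_comp α, ← Ext.smul_comp, ← Ext.mk₀_smul, h]
  simp

theorem subsingleton_localCohomology_of_subsingleton [Subsingleton M] :
    Subsingleton ((localCohomology J i).obj M) := by
  refine subsingleton_of_forall_eq 0 fun x ↦ ?_
  rw [← one_smul R x]
  exact smul_localCohomology_eq_zero (Module.mem_annihilator.mpr fun _ ↦ Subsingleton.elim _ _) x

theorem subsingleton_localCohomology_of_injective [Injective M] :
    Subsingleton ((localCohomology J (i + 1)).obj M) := by
  refine subsingleton_of_forall_eq 0 fun x ↦ ?_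
  obtain ⟨n, α, rfl⟩ := exists_localCohomologyMk_eq x
  rw [Ext.eq_zero_of_injective α, map_zero]

end Elementary

/-! ### Torsion modules -/

section DegreeZero

variable {M N : ModuleCat.{u} R}

variable (J M) in
/-- The canonical map `H^0_J(M) → M`, evaluating a map `R/J^n → M` at `1`. -/
def localCohomologyZeroToModule : (localCohomology J 0).obj M →ₗ[R] M :=
  localCohomologyLift (fun n ↦ LinearMap.applyₗ (Submodule.Quotient.mk (1 : R) : R ⧸ J ^ n) ∘ₗ
    (ModuleCat.homLinearEquiv (S := R)).toLinearMap ∘ₗ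
      (Ext.linearEquiv₀ (R := R)).toLinearMap) fun m n h α ↦ by
    obtain ⟨f, rfl⟩ := (Ext.linearEquiv₀ (R := R)).symm.surjective α
    simp only [LinearMap.comp_apply, LinearEquiv.coe_coe, Ext.linearEquiv₀_symm_apply,
      Ext.mk₀_comp_mk₀]
    simp only [← Ext.linearEquiv₀_symm_apply (R := R), LinearEquiv.apply_symm_apply]
    rfl

theorem localCohomologyZeroToModule_mk₀ {n : ℕ} (f : ModuleCat.of R (R ⧸ J ^ n) ⟶ M) :
    localCohomologyZeroToModule J M (localCohomologyMk J M 0 n (Ext.mk₀ f)) =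
      f (Submodule.Quotient.mk 1) := by
  rw [localCohomologyZeroToModule, localCohomologyLift_mk]
  simp only [← Ext.linearEquiv₀_symm_apply (R := R), LinearMap.comp_apply, LinearEquiv.coe_coe,
    LinearEquiv.apply_symm_apply]
  rfl

theorem exists_localCohomologyMk_mk₀_eq (x : (localCohomology J 0).obj M) :
    ∃ (n : ℕ) (f : ModuleCat.of R (R ⧸ J ^ n) ⟶ M), localCohomologyMk J M 0 n (Ext.mk₀ f) = x := by
  obtain ⟨n, α, rfl⟩ := exists_localCohomologyMk_eq x
  obtain ⟨f, rfl⟩ := (Ext.linearEquiv₀ (R := R)).symm.surjective α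
  exact ⟨n, f, by rw [Ext.linearEquiv₀_symm_apply]⟩

theorem localCohomologyZeroToModule_map (f : M ⟶ N) (x : (localCohomology J 0).obj M) :
    localCohomologyZeroToModule J N ((localCohomology J 0).map f x) =
      f (localCohomologyZeroToModule J M x) := by
  obtain ⟨n, g, rfl⟩ := exists_localCohomologyMk_mk₀_eq x
  rw [localCohomology_map_mk, Ext.mk₀_comp_mk₀, localCohomologyZeroToModule_mk₀,
    localCohomologyZeroToModule_mk₀, ConcreteCategory.comp_apply]

theorem localCohomologyZeroToModule_injective :
    Function.Injective (localCohomologyZeroToModule J M) := by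
  refine (injective_iff_map_eq_zero _).mpr fun x hx ↦ ?_
  obtain ⟨n, f, rfl⟩ := exists_localCohomologyMk_mk₀_eq x
  rw [localCohomologyZeroToModule_mk₀] at hx
  obtain rfl : f = 0 := by
    ext
    exact hx
  rw [Ext.mk₀_zero, map_zero]

theorem range_localCohomologyZeroToModule :
    LinearMap.range (localCohomologyZeroToModule J M) = J.primaryComponent M := by
  refine le_antisymm ?_ fun x hx ↦ ?_
  · rintro _ ⟨x, rfl⟩
    exact primaryComponent_le_comap J _ (primaryComponent_localCohomology_eq_top.ge trivial)
  · obtain ⟨n, hn⟩ := mem_primaryComponent_iff.mp hx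
    refine ⟨localCohomologyMk J M 0 n (Ext.mk₀ (ModuleCat.ofHom
      ((J ^ n).liftQ (LinearMap.toSpanSingleton R M x) hn))), ?_⟩
    rw [localCohomologyZeroToModule_mk₀]
    exact one_smul R x

variable (J M) in
/-- The identification of `H^0_J(M)` with the `J`-power torsion submodule `Γ_J(M)`. -/
def localCohomologyZeroEquiv : (localCohomology J 0).obj M ≃ₗ[R] J.primaryComponent M :=
  (LinearEquiv.ofInjective _ localCohomologyZeroToModule_injective).trans
    (LinearEquiv.ofEq _ _ range_localCohomologyZeroToModule)

theorem subsingleton_localCohomology_zero_iff :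
    Subsingleton ((localCohomology J 0).obj M) ↔ J.primaryComponent M = ⊥ := by
  rw [(localCohomologyZeroEquiv J M).toEquiv.subsingleton_congr,
    Submodule.subsingleton_iff_eq_bot]

theorem localCohomology_zero_map_surjective (h : J.primaryComponent M = ⊤) {f : M ⟶ N}
    (hf : Function.Surjective f) : Function.Surjective ((localCohomology J 0).map f) := by
  intro y
  obtain ⟨x, hx⟩ := hf (localCohomologyZeroToModule J N y)
  obtain ⟨z, rfl⟩ := (range_localCohomologyZeroToModule.trans h).ge (Submodule.mem_top (x := x))
  exact ⟨z, localCohomologyZeroToModule_injective (by rw [localCohomologyZeroToModule_map, hx])⟩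

end DegreeZero

section TorsionModule

variable {M N : ModuleCat.{u} R}

theorem cokernel_shortExact (f : M ⟶ N) [Mono f] :
    (ShortComplex.mk f (cokernel.π f) (cokernel.condition f)).ShortExact where
  exact := ShortComplex.exact_cokernel f

theorem moduleCat_injective_primaryComponent [IsNoetherianRing R] (J : Ideal R)
    {E : ModuleCat.{u} R} [hE : Injective E] : Injective (ModuleCat.of R (J.primaryComponent E)) :=
  have : Injective (ModuleCat.of R E) := hE
  have : Module.Injective R E := Module.injective_module_of_injective_object R E
  Module.injective_object_of_injective_module R _

theorem exists_mono_injective_of_primaryComponent_eq_top [IsNoetherianRing R]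
    (h : J.primaryComponent M = ⊤) :
    ∃ (E : ModuleCat.{u} R) (f : M ⟶ E), Mono f ∧ Injective E ∧ J.primaryComponent E = ⊤ := by
  obtain ⟨E, _, ι, hι⟩ := EnoughInjectives.presentation M
  rw [ModuleCat.mono_iff_injective] at hι
  have hmem (x : M) : ι x ∈ J.primaryComponent E := primaryComponent_le_comap J ι.hom (h.ge trivial)
  exact ⟨.of R (J.primaryComponent E), ModuleCat.ofHom (ι.hom.codRestrict _ hmem),
    (ModuleCat.mono_iff_injective _).mpr fun x y hxy ↦ hι (congrArg Subtype.val hxy),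
    moduleCat_injective_primaryComponent J, primaryComponent_primaryComponent⟩

theorem subsingleton_localCohomology_of_primaryComponent_eq_top [IsNoetherianRing R]
    (h : J.primaryComponent M = ⊤) (i : ℕ) :
    Subsingleton ((localCohomology J (i + 1)).obj M) := by
  induction i generalizing M with
  | zero =>
    obtain ⟨E, f, _, _, hE⟩ := exists_mono_injective_of_primaryComponent_eq_top h
    have hS := cokernel_shortExact f
    have hvanish := subsingleton_localCohomology_of_injective (J := J) (M := E) (i := 0)
    refine subsingleton_of_forall_eq 0 fun x ↦ ?_
    obtain ⟨y, rfl⟩ := (localCohomology_exact_δ_map J hS 0 x).mp (Subsingleton.elim _ _)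
    exact (localCohomology_exact_map_δ J hS 0 y).mpr
      (localCohomology_zero_map_surjective hE ((ModuleCat.epi_iff_surjective _).mp hS.epi_g) y)
  | succ i ih =>
    obtain ⟨E, f, _, _, hE⟩ := exists_mono_injective_of_primaryComponent_eq_top h
    have hS := cokernel_shortExact f
    have hK : J.primaryComponent ↑(cokernel f) = ⊤ :=
      primaryComponent_eq_top_of_surjective (f := (cokernel.π f).hom)
        ((ModuleCat.epi_iff_surjective _).mp hS.epi_g) hE
    exact subsingleton_localCohomology_X₁ hS (ih hK)
      subsingleton_localCohomology_of_injective

end TorsionModule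

/-! ### The dimension shift -/

section Composition

variable {I 𝔞 : Ideal R} {M N E : ModuleCat.{u} R}

/-- The short complex `L → M → M ⧸ L` attached to a submodule `L` of `M`. -/
def quotientShortComplex (L : Submodule R M) : ShortComplex (ModuleCat.{u} R) :=
  ShortComplex.mk (ModuleCat.ofHom L.subtype) (ModuleCat.ofHom L.mkQ) (by
    ext x
    exact (Submodule.Quotient.mk_eq_zero L).mpr x.2)

theorem quotientShortComplex_shortExact (L : Submodule R M) :
    (quotientShortComplex L).ShortExact :=
  ModuleCat.shortComplex_shortExact _ (LinearMap.exact_subtype_mkQ L) L.injective_subtype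
    L.mkQ_surjective

theorem subsingleton_of_moduleCat_iso (h : Subsingleton M) (e : M ≅ N) : Subsingleton N :=
  e.toLinearEquiv.toEquiv.subsingleton_congr.mp h

theorem nonempty_localCohomology_X₁_iso_X₂ {S : ShortComplex (ModuleCat.{u} R)}
    (hS : S.ShortExact) (h : ∀ i, Subsingleton ((localCohomology J i).obj S.X₃)) (i : ℕ) :
    Nonempty ((localCohomology J i).obj S.X₁ ≅ (localCohomology J i).obj S.X₂) := by
  refine ⟨(LinearEquiv.ofBijective ((localCohomology J i).map S.f).hom
    ⟨(injective_iff_map_eq_zero _).mpr fun x hx ↦ ?_, fun x ↦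
      (localCohomology_exact_map_map J hS i x).mp ((h i).elim _ _)⟩).toModuleIso⟩
  cases i with
  | zero =>
    have hf : Function.Injective S.f := (ModuleCat.mono_iff_injective _).mp hS.mono_f
    refine localCohomologyZeroToModule_injective (hf ?_)
    rw [← localCohomologyZeroToModule_map, hx, map_zero, map_zero, map_zero]
  | succ i =>
    obtain ⟨y, rfl⟩ := (localCohomology_exact_δ_map J hS i x).mp hx
    rw [(h i).elim y 0, map_zero]

variable (J) in
/-- The map `N ⧸ Γ_J(N) → E ⧸ Γ_J(E)` induced by `f : N → E`. -/
def quotientPrimaryComponentMap (f : N ⟶ E) :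
    ModuleCat.of R (N ⧸ J.primaryComponent N) ⟶ ModuleCat.of R (E ⧸ J.primaryComponent E) :=
  ModuleCat.ofHom (Submodule.mapQ _ _ f.hom (primaryComponent_le_comap J f.hom))

instance quotientPrimaryComponentMap_mono (f : N ⟶ E) [Mono f] :
    Mono (quotientPrimaryComponentMap J f) :=
  (ModuleCat.mono_iff_injective _).mpr <|
    mapQ_primaryComponent_injective ((ModuleCat.mono_iff_injective f).mp inferInstance)

theorem primaryComponent_cokernel_quotientPrimaryComponentMap_eq_top (f : N ⟶ E)
    (hE : I.primaryComponent E = ⊤) :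
    I.primaryComponent ↑(cokernel (quotientPrimaryComponentMap J f)) = ⊤ :=
  have hπ : Function.Surjective (cokernel.π (quotientPrimaryComponentMap J f)).hom :=
    (ModuleCat.epi_iff_surjective _).mp inferInstance
  primaryComponent_eq_top_of_surjective hπ
    (primaryComponent_eq_top_of_surjective (J.primaryComponent E).mkQ_surjective hE)

variable [IsNoetherianRing R]

theorem subsingleton_localCohomology_primaryComponent (i : ℕ) :
    Subsingleton ((localCohomology J (i + 1)).obj (.of R (J.primaryComponent M))) :=
  subsingleton_localCohomology_of_primaryComponent_eq_top primaryComponent_primaryComponent i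

theorem subsingleton_localCohomology_zero_quotient_primaryComponent (h : J ≤ 𝔞) :
    Subsingleton ((localCohomology 𝔞 0).obj (.of R (M ⧸ J.primaryComponent M))) :=
  subsingleton_localCohomology_zero_iff.mpr <| eq_bot_iff.mpr <|
    (primaryComponent_anti h).trans primaryComponent_quotient_primaryComponent.le

theorem subsingleton_localCohomology_quotient_primaryComponent_of_injective [Injective E]
    (h : J ≤ 𝔞) (i : ℕ) :
    Subsingleton ((localCohomology 𝔞 i).obj (.of R (E ⧸ J.primaryComponent E))) := by
  cases i with
  | zero => exact subsingleton_localCohomology_zero_quotient_primaryComponent h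
  | succ i =>
    have := moduleCat_injective_primaryComponent J (E := E)
    exact subsingleton_localCohomology_X₃ (quotientShortComplex_shortExact _)
      (subsingleton_localCohomology_of_injective (M := E))
      (subsingleton_localCohomology_of_injective (M := .of R (J.primaryComponent E)))

theorem nonempty_localCohomology_cokernel_iso (f : N ⟶ E) [Mono f] [Injective E] (hJ : J ≤ 𝔞)
    {n : ℕ} (h : ∀ m, n < m →
      Subsingleton ((localCohomology 𝔞 m).obj (.of R (J.primaryComponent N)))) :
    Nonempty ((localCohomology 𝔞 n).obj (cokernel (quotientPrimaryComponentMap J f)) ≅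
      (localCohomology 𝔞 (n + 1)).obj N) := by
  obtain ⟨e⟩ := nonempty_localCohomology_X₃_iso_X₁
    (cokernel_shortExact (quotientPrimaryComponentMap J f))
    (subsingleton_localCohomology_quotient_primaryComponent_of_injective hJ n)
    (subsingleton_localCohomology_quotient_primaryComponent_of_injective hJ (n + 1))
  obtain ⟨e'⟩ := nonempty_localCohomology_X₂_iso_X₃
    (quotientShortComplex_shortExact (J.primaryComponent N)) (h _ n.lt_succ_self) (h _ (by lia))
  exact ⟨e.trans e'.symm⟩

theorem nonempty_localCohomology_iso_add_of_primaryComponent_eq_top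
    (h : I.primaryComponent N = ⊤) (n : ℕ) :
    Nonempty ((localCohomology J n).obj N ≅ (localCohomology (I + J) n).obj N) := by
  induction n generalizing N with
  | zero =>
    exact ⟨(localCohomologyZeroEquiv J N ≪≫ₗ
      LinearEquiv.ofEq _ _ (primaryComponent_add_of_eq_top h).symm ≪≫ₗ
      (localCohomologyZeroEquiv (I + J) N).symm).toModuleIso⟩
  | succ n ih =>
    obtain ⟨E, f, _, _, hE⟩ := exists_mono_injective_of_primaryComponent_eq_top h
    obtain ⟨e⟩ := ih (primaryComponent_cokernel_quotientPrimaryComponentMap_eq_top (J := J) f hE)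
    have hΓ : (I + J).primaryComponent (J.primaryComponent N) = ⊤ := by
      rw [primaryComponent_add_of_eq_top
        (primaryComponent_eq_top_of_injective (Submodule.subtype_injective _) h),
        primaryComponent_primaryComponent]
    obtain ⟨e₁⟩ := nonempty_localCohomology_cokernel_iso (J := J) f le_rfl (n := n) fun
      | m + 1, _ => subsingleton_localCohomology_primaryComponent m
    obtain ⟨e₂⟩ := nonempty_localCohomology_cokernel_iso (J := J) f
      (le_sup_right : J ≤ I + J) (n := n) fun
      | m + 1, _ => subsingleton_localCohomology_of_primaryComponent_eq_top hΓ m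
    exact ⟨e₁.symm ≪≫ e ≪≫ e₂⟩

theorem subsingleton_localCohomology_add (h : ∀ q, Subsingleton ((localCohomology I q).obj N))
    (n : ℕ) : Subsingleton ((localCohomology (I + J) n).obj N) := by
  have hΓ : I.primaryComponent N = ⊥ := subsingleton_localCohomology_zero_iff.mp (h 0)
  induction n generalizing N with
  | zero =>
    exact subsingleton_localCohomology_zero_iff.mpr
      (eq_bot_iff.mpr ((primaryComponent_anti le_sup_left).trans hΓ.le))
  | succ n ih =>
    obtain ⟨E, _, f, _⟩ := EnoughInjectives.presentation N
    have := Submodule.subsingleton_iff_eq_bot.mpr hΓ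
    have hK (q) : Subsingleton
        ((localCohomology I q).obj (cokernel (quotientPrimaryComponentMap I f))) := by
      obtain ⟨e⟩ := nonempty_localCohomology_cokernel_iso f (le_refl I) (n := q)
        fun m _ ↦ subsingleton_localCohomology_of_subsingleton
      exact subsingleton_of_moduleCat_iso (h (q + 1)) e.symm
    obtain ⟨e⟩ := nonempty_localCohomology_cokernel_iso f (le_sup_left : I ≤ I + J) (n := n)
      fun m _ ↦ subsingleton_localCohomology_of_subsingleton
    exact subsingleton_of_moduleCat_iso
      (ih hK (subsingleton_localCohomology_zero_iff.mp (hK 0))) e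

theorem nonempty_localCohomology_zero_comp_iso
    (h : ∀ q > 0, Subsingleton ((localCohomology I q).obj M)) (n : ℕ) :
    Nonempty ((localCohomology J n).obj ((localCohomology I 0).obj M) ≅
      (localCohomology (I + J) n).obj M) := by
  have hQ (q) : Subsingleton ((localCohomology I q).obj (.of R (M ⧸ I.primaryComponent M))) := by
    cases q with
    | zero => exact subsingleton_localCohomology_zero_quotient_primaryComponent le_rfl
    | succ q =>
      exact subsingleton_localCohomology_X₃ (quotientShortComplex_shortExact _)
        (h _ q.succ_pos) (subsingleton_localCohomology_primaryComponent _)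
  obtain ⟨e⟩ := nonempty_localCohomology_iso_add_of_primaryComponent_eq_top (J := J)
    (N := .of R (I.primaryComponent M)) primaryComponent_primaryComponent n
  obtain ⟨e'⟩ := nonempty_localCohomology_X₁_iso_X₂ (J := I + J)
    (quotientShortComplex_shortExact (I.primaryComponent M))
    (subsingleton_localCohomology_add hQ) n
  exact ⟨(localCohomology J n).mapIso (localCohomologyZeroEquiv I M).toModuleIso ≪≫ e ≪≫ e'⟩

theorem nonempty_localCohomology_comp_iso {d t : ℕ}
    (hJ : ∀ p q, d < p → Subsingleton ((localCohomology J p).obj ((localCohomology I q).obj M)))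
    (hI : ∀ q, t < q → Subsingleton ((localCohomology I q).obj M)) :
    Nonempty ((localCohomology J d).obj ((localCohomology I t).obj M) ≅
      (localCohomology (I + J) (d + t)).obj M) := by
  induction t generalizing M with
  | zero => exact nonempty_localCohomology_zero_comp_iso hI d
  | succ t ih =>
    obtain ⟨E, _, f, _⟩ := EnoughInjectives.presentation M
    have e (q) := (nonempty_localCohomology_cokernel_iso f (le_refl I) (n := q) fun
      | m + 1, _ => subsingleton_localCohomology_primaryComponent m).some
    have hΓ (m) (hm : d + t < m) :
        Subsingleton ((localCohomology (I + J) m).obj (.of R (I.primaryComponent M))) := by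
      obtain ⟨e'⟩ := nonempty_localCohomology_iso_add_of_primaryComponent_eq_top (J := J)
        (N := .of R (I.primaryComponent M)) primaryComponent_primaryComponent m
      exact subsingleton_of_moduleCat_iso (hJ m 0 (by lia))
        ((localCohomology J m).mapIso (localCohomologyZeroEquiv I M).toModuleIso ≪≫ e')
    obtain ⟨e'⟩ := nonempty_localCohomology_cokernel_iso f (le_sup_left : I ≤ I + J) hΓ
    obtain ⟨e''⟩ := ih
      (fun p q hp ↦ subsingleton_of_moduleCat_iso (hJ p (q + 1) hp)
        ((localCohomology J p).mapIso (e q).symm))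
      (fun q hq ↦ subsingleton_of_moduleCat_iso (hI (q + 1) (by lia)) (e q).symm)
    exact ⟨(localCohomology J d).mapIso (e t).symm ≪≫ e'' ≪≫ e'⟩

end Composition

/-! ### Grothendieck vanishing -/

section Vanishing

variable {I : Ideal R} {M : ModuleCat.{u} R} {i : ℕ}

theorem supportDim_le_ringKrullDim_quotient_of_le_radical {R N : Type*} [CommRing R]
    [AddCommGroup N] [Module R N] {𝔞 : Ideal R} (h : 𝔞 ≤ (Module.annihilator R N).radical) :
    Module.supportDim R N ≤ ringKrullDim (R ⧸ 𝔞) := by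
  rw [ringKrullDim_quotient]
  refine Order.krullDim_le_of_strictMono (Set.inclusion fun 𝔭 h𝔭 ↦ ?_) fun _ _ h ↦ h
  exact h.trans (𝔭.2.radical_le_iff.mpr (Module.annihilator_le_of_mem_support h𝔭))

theorem subsingleton_localCohomology_of_isSMulRegular {r : R} (hrJ : r ∈ J)
    (hr : IsSMulRegular M r)
    (h : Subsingleton ((localCohomology J i).obj (.of R (QuotSMulTop r M)))) :
    Subsingleton ((localCohomology J (i + 1)).obj M) := by
  have hS : (M.smulShortComplex r).ShortExact := hr.smulShortComplex_shortExact
  have hreg : IsSMulRegular ((localCohomology J (i + 1)).obj M) r := by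
    refine isSMulRegular_iff_right_eq_zero_of_smul.mpr fun x hx ↦ ?_
    rw [← localCohomology_map_smul_id] at hx
    obtain ⟨y, rfl⟩ := (localCohomology_exact_δ_map J hS i x).mp hx
    exact (congrArg _ (h.elim y 0)).trans (map_zero _)
  refine subsingleton_of_forall_eq 0 fun x ↦ ?_
  obtain ⟨n, hn⟩ := mem_primaryComponent_iff.mp
    (primaryComponent_localCohomology_eq_top.ge (Submodule.mem_top (x := x)))
  exact (hreg.pow n).right_eq_zero_of_smul (hn _ (Ideal.pow_mem_pow hrJ n))

theorem le_radical_annihilator_of_fg_localCohomology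
    {L : Submodule R ((localCohomology I i).obj M)} (hL : L.FG) :
    I + Module.annihilator R M ≤ (Module.annihilator R L).radical := by
  obtain ⟨n, hn⟩ := exists_pow_smul_eq_zero_of_fg hL
    (le_top.trans primaryComponent_localCohomology_eq_top.ge)
  refine sup_le (fun a ha ↦ ⟨n, ?_⟩) fun a ha ↦ Ideal.le_radical ?_
  · exact Module.mem_annihilator.mpr fun x ↦ Subtype.ext (hn _ (Ideal.pow_mem_pow ha n) x x.2)
  · exact Module.mem_annihilator.mpr fun x ↦ Subtype.ext (smul_localCohomology_eq_zero ha x.1)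

theorem subsingleton_localCohomology_of_cohomologicalDimension_lt {q : ℕ}
    (h : cohomologicalDimension I M < q) :
    Subsingleton ((localCohomology I q).obj M) := by
  rw [← not_nontrivial_iff_subsingleton]
  exact fun hq ↦ h.not_ge (le_sSup ⟨q, rfl, hq⟩)

variable [IsNoetherianRing R]

theorem subsingleton_localCohomology_of_finite_of_supportDim_lt [Module.Finite R M] {n : ℕ}
    (h : Module.supportDim R M < n) (hi : n ≤ i) : Subsingleton ((localCohomology J i).obj M) := by
  induction n generalizing M i with
  | zero =>
    have := (Module.supportDim_eq_bot_iff_subsingleton R M).mp (WithBot.lt_coe_bot.mp h)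
    exact subsingleton_localCohomology_of_subsingleton
  | succ n ih =>
    obtain ⟨i, rfl⟩ := Nat.exists_eq_succ_of_ne_zero (Nat.ne_zero_of_lt hi)
    let Q := M ⧸ J.primaryComponent M
    obtain ⟨r, hrJ, hr⟩ := exists_isSMulRegular_of_primaryComponent_eq_bot
      (primaryComponent_quotient_primaryComponent (J := J) (N := M))
    have hdim : Module.supportDim R (QuotSMulTop r Q) + 1 < n + 1 :=
      calc Module.supportDim R (QuotSMulTop r Q) + 1
        _ ≤ Module.supportDim R Q :=
          Module.supportDim_quotSMulTop_succ_le_of_notMem_minimalPrimes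
            fun _ ↦ hr.notMem_of_mem_minimalPrimes
        _ ≤ Module.supportDim R M :=
          Module.supportDim_le_of_surjective _ (Submodule.mkQ_surjective _)
        _ < n + 1 := by exact_mod_cast h
    have hquot : Subsingleton ((localCohomology J i).obj (.of R (QuotSMulTop r Q))) :=
      ih (lt_of_add_lt_add_right hdim) (Nat.succ_le_succ_iff.mp hi)
    exact subsingleton_localCohomology_X₂
      (quotientShortComplex_shortExact (J.primaryComponent M))
      (subsingleton_localCohomology_primaryComponent i)
      (subsingleton_localCohomology_of_isSMulRegular (M := .of R Q) hrJ hr hquot)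

theorem exists_fg_ext_comp_eq (X : ModuleCat.{u} R) [Module.Finite R X] (i : ℕ) (x : Ext X M i) :
    ∃ L : Submodule R M, L.FG ∧ ∃ y : Ext X (ModuleCat.of R L) i,
      y.comp (Ext.mk₀ (ModuleCat.ofHom L.subtype)) (add_zero i) = x := by
  induction i generalizing X with
  | zero =>
    obtain ⟨f, rfl⟩ := (Ext.linearEquiv₀ (R := R)).symm.surjective x
    refine ⟨LinearMap.range f.hom, .of_finite, Ext.mk₀ (ModuleCat.ofHom f.hom.rangeRestrict), ?_⟩
    rw [Ext.mk₀_comp_mk₀]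
    rfl
  | succ i ih =>
    obtain ⟨P, _, _, _, _, f, hf⟩ := Module.exists_finite_presentation R X
    have hS := LinearMap.shortExact_shortComplexKer hf
    obtain ⟨z, rfl⟩ := precomp_extClass_surjective_of_projective_X₂ M hS i x
    obtain ⟨L, hL, y, rfl⟩ := ih _ z
    exact ⟨L, hL, hS.extClass.comp y (add_comm 1 i),
      Ext.comp_assoc _ _ _ (add_comm 1 i) (add_zero i) (by lia)⟩

theorem exists_fg_localCohomology_map_eq (x : (localCohomology J i).obj M) :
    ∃ L : Submodule R M, L.FG ∧
      ∃ y, (localCohomology J i).map (ModuleCat.ofHom L.subtype) y = x := by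
  obtain ⟨n, z, rfl⟩ := exists_localCohomologyMk_eq x
  have : Module.Finite R (ModuleCat.of R (R ⧸ J ^ n)) :=
    inferInstanceAs (Module.Finite R (R ⧸ J ^ n))
  obtain ⟨L, hL, y, rfl⟩ := exists_fg_ext_comp_eq _ i z
  exact ⟨L, hL, localCohomologyMk J _ i n y, localCohomology_map_mk ..⟩

theorem subsingleton_localCohomology_of_forall_supportDim_lt {n : ℕ}
    (h : ∀ L : Submodule R M, L.FG → Module.supportDim R L < n) (hi : n ≤ i) :
    Subsingleton ((localCohomology J i).obj M) := by
  refine subsingleton_of_forall_eq 0 fun x ↦ ?_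
  obtain ⟨L, hL, y, rfl⟩ := exists_fg_localCohomology_map_eq x
  have : Module.Finite R L := .of_fg hL
  have := subsingleton_localCohomology_of_finite_of_supportDim_lt (M := .of R L) (J := J)
    (h L hL) hi
  rw [Subsingleton.elim y 0, map_zero]

theorem subsingleton_localCohomology_localCohomology {d p : ℕ}
    (hd : ringKrullDim (R ⧸ (I + Module.annihilator R M)) ≤ d) (hp : d < p) :
    Subsingleton ((localCohomology J p).obj ((localCohomology I i).obj M)) := by
  refine subsingleton_localCohomology_of_forall_supportDim_lt (n := d + 1) (fun L hL ↦ ?_) hp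
  calc Module.supportDim R L
    _ ≤ ringKrullDim (R ⧸ (I + Module.annihilator R M)) :=
      supportDim_le_ringKrullDim_quotient_of_le_radical
        (le_radical_annihilator_of_fg_localCohomology hL)
    _ ≤ d := hd
    _ < (d + 1 : ℕ) := by exact_mod_cast d.lt_succ_self

theorem localCohomology_iso_of_cohomologicalDimension_eq_general
    {d t : ℕ} (hd : ringKrullDim (R ⧸ (I + Module.annihilator R M)) ≤ d)
    (hcd : cohomologicalDimension I M ≤ t) :
    Nonempty ((localCohomology J d).obj ((localCohomology I t).obj M) ≅
      (localCohomology (I + J) (d + t)).obj M) :=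
  nonempty_localCohomology_comp_iso (fun _ _ ↦ subsingleton_localCohomology_localCohomology hd)
    fun _ hq ↦ subsingleton_localCohomology_of_cohomologicalDimension_lt
      (hcd.trans_lt (by exact_mod_cast hq))

end Vanishing

end

/-- if `dim (R/(I + Ann M)) = d`, `H^{d+t}_{I+J}(M) ≠ 0` and `cd(I,M) = t`,
then `H^d_J(H^t_I(M)) ≅ H^{d+t}_{I+J}(M)`. -/
theorem localCohomology_iso_of_cohomologicalDimension_eq
    (R : Type u) [CommRing R] [IsNoetherianRing R] (I : Ideal R) (M : ModuleCat.{u} R)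
    (d t : ℕ) (hd : ringKrullDim (R ⧸ (I + Module.annihilator R M)) = (d : WithBot ℕ∞))
    (J : Ideal R) (hJ : Nontrivial ((localCohomology (I + J) (d + t)).obj M))
    (hcd : cohomologicalDimension I M = (t : ℕ∞)) :
    Nonempty ((localCohomology J d).obj ((localCohomology I t).obj M) ≅
      (localCohomology (I + J) (d + t)).obj M) :=
  localCohomology_iso_of_cohomologicalDimension_eq_general hd.le hcd.le
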